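/- Let (A,Λ) be an associative form ring with 1, n ≥ 3, and let (I,Γ), (J,Δ) be form ideals of (A,Λ). Then for any index i ∈ Ω, any k ∈ Ω with k ≠ ±i, any a ∈ I and b ∈ λ^{(ε(i)−1)/2}Δ, one has [T_{i,−i}(a − λ^{ε(−i)}·ā), T_{−i,i}(b)] ≡ [T_{i,k}(a), T_{k,i}(b)] modulo EU(2n,(I,Γ)∘(J,Δ)). Here x ≡ y modulo a subgroup H means xy⁻¹ ∈ H. -/

import Mathlib

open Matrix
open scoped commutatorElement

/-- Bak's form ring data on a ring `A`: an involution `bar`, a central symmetry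
`λ` with `λ λ̄ = 1`, and a form parameter `Λ`. -/
structure FormRingData (A : Type*) [Ring A] where
  bar : A →+ A
  bar_mul : ∀ a b : A, bar (a * b) = bar b * bar a
  bar_bar : ∀ a : A, bar (bar a) = a
  lam : A
  lam_comm : ∀ a : A, lam * a = a * lam
  lam_bar : lam * bar lam = 1
  Lambda : AddSubgroup A
  lambdaMin_mem : ∀ c : A, c - lam * bar c ∈ Lambda
  lambdaMax_mem : ∀ x ∈ Lambda, x = -(lam * bar x)
  lambda_conj : ∀ (c : A), ∀ x ∈ Lambda, c * x * bar c ∈ Lambda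

namespace FormRingData

variable {A : Type*} [Ring A]

/-- Integral powers of the symmetry `λ`; negative powers use `λ̄ = λ⁻¹`. -/
def lpow (D : FormRingData A) (k : ℤ) : A :=
  if 0 ≤ k then D.lam ^ k.toNat else (D.bar D.lam) ^ (-k).toNat

end FormRingData

/-- The index set `Ω = {1,…,n,−n,…,−1}`, coded as `Fin n × Bool`
(second component `true` = positive index). -/
abbrev Idx (n : ℕ) := Fin n × Bool

namespace Idx

/-- The involution `i ↦ −i` on indices. -/
def neg {n : ℕ} (i : Idx n) : Idx n := (i.1, !i.2)

/-- The sign `ε(i) ∈ {±1}`. -/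
def eps {n : ℕ} (i : Idx n) : ℤ := if i.2 then 1 else -1

theorem neg_ne {n : ℕ} (i : Idx n) : neg i ≠ i := by
  simp [neg, Prod.ext_iff]

theorem neg_injective {n : ℕ} : Function.Injective (neg (n := n)) := by
  intro i j h
  simp only [neg, Prod.mk.injEq] at h
  refine Prod.ext h.1 ?_
  have h2 := h.2
  cases hi : i.2 <;> cases hj : j.2 <;> simp_all

theorem neg_neg {n : ℕ} (i : Idx n) : neg (neg i) = i := by
  simp [neg]

end Idx

/-- `GL(2n, A)`, realised as the units of the `Ω × Ω` matrix ring over `A`. -/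
abbrev GLn (A : Type*) [Ring A] (n : ℕ) := (Matrix (Idx n) (Idx n) A)ˣ

section aux

theorem one_add_mul_one_sub {R : Type*} [Ring R] {X : R} (h : X * X = 0) :
    (1 + X) * (1 - X) = 1 := by
  have hh : (1 + X) * (1 - X) = 1 - X * X := by noncomm_ring
  rw [hh, h, sub_zero]

theorem one_sub_mul_one_add {R : Type*} [Ring R] {X : R} (h : X * X = 0) :
    (1 - X) * (1 + X) = 1 := by
  have hh : (1 - X) * (1 + X) = 1 - X * X := by noncomm_ring
  rw [hh, h, sub_zero]

theorem stdBasisMatrix_neg' {A : Type*} [Ring A] {n : ℕ} (i j : Idx n) (c : A) :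
    Matrix.single i j (-c) = -Matrix.single i j c := by
  refine eq_neg_of_add_eq_zero_left ?_
  rw [← Matrix.single_add]
  simp

end aux

namespace FormRingData

variable {A : Type*} [Ring A] {n : ℕ}

/-- The off-diagonal part of a short root element. -/
def Xmat (D : FormRingData A) (i j : Idx n) (c : A) : Matrix (Idx n) (Idx n) A :=
  Matrix.single i j c -
    Matrix.single (Idx.neg j) (Idx.neg i) (D.lpow ((Idx.eps j - Idx.eps i) / 2) * D.bar c)

theorem Xmat_mul (D : FormRingData A) {i j : Idx n} (hij : i ≠ j) (c c' : A) :
    D.Xmat i j c * D.Xmat i j c' = 0 := by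
  unfold Xmat
  rw [sub_mul, mul_sub, mul_sub,
    Matrix.single_mul_single_of_ne _ _ _ _ (Ne.symm hij),
    Matrix.single_mul_single_of_ne _ _ _ _ (Ne.symm (Idx.neg_ne j)),
    Matrix.single_mul_single_of_ne _ _ _ _ (Idx.neg_ne i),
    Matrix.single_mul_single_of_ne _ _ _ _ (fun h => hij (Idx.neg_injective h))]
  simp

theorem Xmat_neg (D : FormRingData A) (i j : Idx n) (c : A) :
    D.Xmat i j (-c) = -D.Xmat i j c := by
  unfold Xmat
  rw [map_neg, mul_neg, stdBasisMatrix_neg', stdBasisMatrix_neg']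
  abel

/-- The elementary short root unipotent `T_{ij}(c)`, for `i ≠ ±j`
(with junk value `1` when `i = j`). -/
def TS (D : FormRingData A) (i j : Idx n) (c : A) : GLn A n :=
  if h : i = j then 1 else
    { val := 1 + D.Xmat i j c
      inv := 1 + D.Xmat i j (-c)
      val_inv := by
        rw [D.Xmat_neg, ← sub_eq_add_neg]
        exact one_add_mul_one_sub (D.Xmat_mul h c c)
      inv_val := by
        rw [D.Xmat_neg, ← sub_eq_add_neg]
        exact one_sub_mul_one_add (D.Xmat_mul h c c) }

/-- The elementary long root unipotent `T_{i,−i}(c)`. -/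
def TL (D : FormRingData A) (i : Idx n) (c : A) : GLn A n where
  val := 1 + Matrix.single i (Idx.neg i) c
  inv := 1 + Matrix.single i (Idx.neg i) (-c)
  val_inv := by
    rw [stdBasisMatrix_neg', ← sub_eq_add_neg]
    exact one_add_mul_one_sub (Matrix.single_mul_single_of_ne _ _ _ _ (Idx.neg_ne i) _)
  inv_val := by
    rw [stdBasisMatrix_neg', ← sub_eq_add_neg]
    exact one_sub_mul_one_add (Matrix.single_mul_single_of_ne _ _ _ _ (Idx.neg_ne i) _)

/-- The elementary unitary transvection `T_{ij}(c)` (long or short root type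
according to whether `j = −i`). -/
def T (D : FormRingData A) (i j : Idx n) (c : A) : GLn A n :=
  if j = Idx.neg i then D.TL i c else D.TS i j c

/-- The elementary commutator `Y_{ij}(a,b) = [T_{ij}(a), T_{ji}(b)]`. -/
def Y (D : FormRingData A) (i j : Idx n) (a b : A) : GLn A n :=
  ⁅D.T i j a, D.T j i b⁆

/-- The elementary conjugate `Z_{ij}(a,c) = T_{ji}(c) T_{ij}(a) T_{ji}(−c)`. -/
def Z (D : FormRingData A) (i j : Idx n) (a c : A) : GLn A n :=
  D.T j i c * D.T i j a * D.T j i (-c)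

/-- The set of elementary unitary transvections of level `(I,Γ)`. -/
def transvGen (D : FormRingData A) (n : ℕ) (I Γ : AddSubgroup A) : Set (GLn A n) :=
  {x | ∃ i j : Idx n, i ≠ j ∧ i ≠ Idx.neg j ∧ ∃ c ∈ I, x = D.TS i j c} ∪
    {x | ∃ i : Idx n, ∃ g ∈ Γ, x = D.TL i (D.lpow (-(Idx.eps i + 1) / 2) * g)}

/-- The unrelative elementary subgroup `FU(2n, I, Γ)`. -/
def FU (D : FormRingData A) (n : ℕ) (I Γ : AddSubgroup A) : Subgroup (GLn A n) :=
  Subgroup.closure (D.transvGen n I Γ)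

/-- The absolute elementary unitary group `EU(2n, A, Λ)`. -/
def EUmax (D : FormRingData A) (n : ℕ) : Subgroup (GLn A n) :=
  D.FU n ⊤ D.Lambda

/-- The relative elementary subgroup `EU(2n, I, Γ)`: the normal closure of
`FU(2n, I, Γ)` in `EU(2n, A, Λ)`. -/
def EU (D : FormRingData A) (n : ℕ) (I Γ : AddSubgroup A) : Subgroup (GLn A n) :=
  Subgroup.closure {x | ∃ g ∈ D.EUmax n, ∃ t ∈ D.transvGen n I Γ, x = g * t * g⁻¹}

/-- The additive subgroup generated by products `st`, `s ∈ S`, `t ∈ T`. -/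
def mulSub (S T : AddSubgroup A) : AddSubgroup A :=
  AddSubgroup.closure {x | ∃ a ∈ S, ∃ b ∈ T, x = a * b}

/-- The symmetrised product `ST + TS` of two (additive subgroups underlying)
two-sided ideals. -/
def symI (S T : AddSubgroup A) : AddSubgroup A :=
  mulSub S T ⊔ mulSub T S

/-- The minimal relative form parameter `Γ_min(K)` of level `K`. -/
def gammaMin (D : FormRingData A) (K : AddSubgroup A) : AddSubgroup A :=
  AddSubgroup.closure
    ({x | ∃ a ∈ K, x = a - D.lam * D.bar a} ∪
      {x | ∃ a ∈ K, ∃ c ∈ D.Lambda, x = a * c * D.bar a})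

/-- The relative form parameter `ˢΓ = ⟨ b γ b̄ ∣ b ∈ S, γ ∈ Γ ⟩`. -/
def conjPar (D : FormRingData A) (S Γ : AddSubgroup A) : AddSubgroup A :=
  AddSubgroup.closure {x | ∃ b ∈ S, ∃ g ∈ Γ, x = b * g * D.bar b}

/-- The relative form parameter of the symmetrised product
`(I,Γ)∘(J,Δ) = (IJ+JI, Γ_min(IJ+JI) + ᴶΓ + ᴵΔ)`. -/
def symG (D : FormRingData A) (I Γ J Δ : AddSubgroup A) : AddSubgroup A :=
  D.gammaMin (symI I J) ⊔ D.conjPar J Γ ⊔ D.conjPar I Δ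

/-- The elementary subgroup `EU(2n, (I,Γ)∘(J,Δ))` of the symmetrised product. -/
def EUsym (D : FormRingData A) (n : ℕ) (I Γ J Δ : AddSubgroup A) : Subgroup (GLn A n) :=
  D.EU n (symI I J) (D.symG I Γ J Δ)

/-- Position-dependent membership `a ∈ (I,Γ)` at position `(i,j)`:
`a ∈ I` for a short root position, `a ∈ λ^{−(ε(i)+1)/2}Γ` for a long one. -/
def pmem (D : FormRingData A) (I Γ : AddSubgroup A) {n : ℕ} (i j : Idx n) (a : A) : Prop :=
  if j = Idx.neg i then ∃ g ∈ Γ, a = D.lpow (-(Idx.eps i + 1) / 2) * g else a ∈ I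

end FormRingData

/-- A form ideal `(I,Γ)` of the form ring `(A,Λ)`. -/
structure FormIdeal {A : Type*} [Ring A] (D : FormRingData A) where
  I : AddSubgroup A
  Gamma : AddSubgroup A
  mul_mem_left : ∀ (c : A), ∀ x ∈ I, c * x ∈ I
  mul_mem_right : ∀ (c : A), ∀ x ∈ I, x * c ∈ I
  bar_mem : ∀ x ∈ I, D.bar x ∈ I
  gammaMin_le : D.gammaMin I ≤ Gamma
  gamma_le_I : Gamma ≤ I
  gamma_le_Lambda : Gamma ≤ D.Lambda
  gamma_conj : ∀ (c : A), ∀ x ∈ Gamma, c * x * D.bar c ∈ Gamma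

/-!
Put `x = T_{-i,i}(b)`, `y = T_{ik}(a)`, `z = T_{k,-i}(1)`. Then `⁅y, z⁆` is the long root element
`T_{i,-i}(a - λ^{ε(-i)} ā)`, and `⁅z, x⁆ = T_{ki}(b) T_{k,-k}(b')` with `b'` a parameter of level
`Δ`. Modulo `EU(2n, (I,Γ)∘(J,Δ))` the element `x` commutes with `y` and `⁅z, x⁆` commutes with both
`x` and `⁅y, z⁆`, so the Hall-Witt identity degenerates to `⁅⁅y, z⁆, x⁆ = ⁅y, ⁅z, x⁆⁆`; the factor
`T_{k,-k}(b')` commutes with `y` and drops out.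
-/

section Commutator

variable {G : Type*} [Group G]

theorem commutatorElement_assoc_of_commute {x y z : G} (hxy : Commute x y)
    (hx : Commute x ⁅z, x⁆) (hyz : Commute ⁅y, z⁆ ⁅z, x⁆) : ⁅⁅y, z⁆, x⁆ = ⁅y, ⁅z, x⁆⁆ := by
  have hall_witt := commutatorElement_commutatorElement_conj_mul y z x
  have conj_y : x * y * x⁻¹ = y := by rw [hxy.eq, mul_inv_cancel_right]
  have conj_x : z * x * z⁻¹ = ⁅z, x⁆ * x := by rw [commutatorElement_def, inv_mul_cancel_right]
  rw [hxy.commutator_eq, commutatorElement_one_left, mul_one, conj_y, mul_eq_one_iff_eq_inv,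
    commutatorElement_inv, conj_x, commutatorElement_mul_right_eq_mul_conj, hyz.commutator_eq,
    one_mul] at hall_witt
  have hT : Commute ⁅z, x⁆ ⁅⁅y, z⁆, x⁆ := by
    rw [commutatorElement_def ⁅y, z⁆ x]
    exact ((hyz.symm.mul_right hx.symm).mul_right hyz.symm.inv_right).mul_right hx.symm.inv_right
  rwa [hT.eq, mul_inv_cancel_right] at hall_witt

theorem commutatorElement_commutatorElement_eq {x y z u v : G} (hzx : ⁅z, x⁆ = u * v)
    (hyx : Commute y x) (hxu : Commute x u) (hxv : Commute x v) (hyv : Commute y v)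
    (hu : Commute ⁅y, z⁆ u) (hv : Commute ⁅y, z⁆ v) : ⁅⁅y, z⁆, x⁆ = ⁅y, u⁆ := by
  rw [commutatorElement_assoc_of_commute hyx.symm (hzx ▸ hxu.mul_right hxv)
    (hzx ▸ hu.mul_right hv), hzx, commutatorElement_mul_right_eq_mul_conj, hyv.commutator_eq,
    mul_one, mul_inv_cancel_right]

theorem commutatorElement_mul_inv_mem_of_mem_normalizer {N : Subgroup G} {x y z u v w : G}
    (hx : x ∈ Subgroup.normalizer (N : Set G)) (hy : y ∈ Subgroup.normalizer (N : Set G))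
    (hz : z ∈ Subgroup.normalizer (N : Set G)) (hu : u ∈ Subgroup.normalizer (N : Set G))
    (hv : v ∈ Subgroup.normalizer (N : Set G)) (hyz : ⁅y, z⁆ = w)
    (hzx : ⁅z, x⁆ = u * v) (hyx : ⁅y, x⁆ ∈ N) (hxu : ⁅x, u⁆ ∈ N) (hxv : ⁅x, v⁆ ∈ N)
    (hyv : ⁅y, v⁆ ∈ N) (hwu : ⁅w, u⁆ ∈ N) (hwv : ⁅w, v⁆ ∈ N) : ⁅w, x⁆ * ⁅y, u⁆⁻¹ ∈ N := by
  subst hyz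
  let K := Subgroup.normalizer (N : Set G)
  let π : K →* K ⧸ N.subgroupOf K := QuotientGroup.mk' _
  lift x to K using hx
  lift y to K using hy
  lift z to K using hz
  lift u to K using hu
  lift v to K using hv
  have commute_of_mem {g h : K} (hgh : ⁅(g : G), (h : G)⁆ ∈ N) : Commute (π g) (π h) := by
    rw [← commutatorElement_eq_one_iff_commute, ← map_commutatorElement]
    exact (QuotientGroup.eq_one_iff _).2 hgh
  have hzx' : ⁅π z, π x⁆ = π u * π v := by
    rw [← map_commutatorElement, ← map_mul]
    exact congrArg π (Subtype.ext hzx)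
  have hπ : π ⁅⁅y, z⁆, x⁆ = π ⁅y, u⁆ := by
    simp only [map_commutatorElement]
    apply commutatorElement_commutatorElement_eq hzx' (commute_of_mem hyx) (commute_of_mem hxu)
      (commute_of_mem hxv) (commute_of_mem hyv)
    · exact map_commutatorElement π y z ▸ commute_of_mem hwu
    · exact map_commutatorElement π y z ▸ commute_of_mem hwv
  have hdiv := QuotientGroup.eq_iff_div_mem.1 hπ
  rwa [div_eq_mul_inv] at hdiv

end Commutator

section OneAdd

variable {R : Type*} [Ring R] {x y : Rˣ} {a b : R}

theorem commute_of_val_eq_one_add (hx : (x : R) = 1 + a) (hy : (y : R) = 1 + b)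
    (hab : a * b = 0) (hba : b * a = 0) : Commute x y := by
  refine Units.ext ?_
  rw [Units.val_mul, Units.val_mul, hx, hy]
  simp only [mul_add, add_mul, mul_one, one_mul, hab, hba]
  abel

theorem val_commutatorElement_of_val_eq_one_add (hx : (x : R) = 1 + a) (hy : (y : R) = 1 + b)
    (haa : a * a = 0) (hbb : b * b = 0) (hbab : b * a * b = 0) :
    ((⁅x, y⁆ : Rˣ) : R) = 1 + a * b - b * a - a * b * a := by
  have hxy : ((x * y : Rˣ) : R) = (1 + a * b - b * a - a * b * a) * ((y * x : Rˣ) : R) := by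
    have haba : a * b * a * b = 0 := by rw [mul_assoc a, mul_assoc, hbab, mul_zero]
    simp only [Units.val_mul, hx, hy, mul_add, add_mul, sub_mul, mul_one, one_mul, ← mul_assoc,
      haa, hbab, haba, zero_mul, mul_zero, mul_assoc _ b b, hbb, mul_assoc _ a a]
    abel
  rw [commutatorElement_def, mul_assoc, ← _root_.mul_inv_rev, Units.val_mul, hxy, mul_assoc,
    Units.mul_inv, mul_one]

end OneAdd

namespace Idx

variable {n : ℕ} {i j : Idx n}

theorem neg_ne_neg_iff : neg i ≠ neg j ↔ i ≠ j :=
  neg_injective.ne_iff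

theorem ne_neg_comm : i ≠ neg j ↔ j ≠ neg i := by
  rw [← neg_ne_neg_iff, neg_neg, ne_comm]

theorem eps_neg (i : Idx n) : eps (neg i) = -eps i := by
  obtain ⟨m, s⟩ := i
  cases s <;> rfl

theorem eps_eq_one_or_neg_one (i : Idx n) : eps i = 1 ∨ eps i = -1 := by
  obtain ⟨m, s⟩ := i
  cases s <;> simp [eps]

end Idx

namespace FormRingData

section Symmetry

variable {A : Type*} [Ring A] (D : FormRingData A)

theorem bar_one : D.bar 1 = 1 := by
  simpa only [one_mul, D.bar_bar] using (D.bar_mul 1 (D.bar 1)).symm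

theorem bar_lam_mul_lam : D.bar D.lam * D.lam = 1 := by
  rw [← D.lam_comm, D.lam_bar]

theorem lpow_natCast (m : ℕ) : D.lpow m = D.lam ^ m := by
  simp only [lpow, Nat.cast_nonneg, if_true, Int.toNat_natCast]

theorem lpow_neg_natCast (m : ℕ) : D.lpow (-m) = D.bar D.lam ^ m := by
  obtain rfl | hm := m.eq_zero_or_pos
  · simp [lpow]
  · simp [lpow, hm.ne']

/-- The symmetry `λ` as a unit of `A`, which makes `lpow` an integral power in the usual sense. -/
def lamUnit : Aˣ := ⟨D.lam, D.bar D.lam, D.lam_bar, D.bar_lam_mul_lam⟩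

theorem lpow_eq_lamUnit_zpow (k : ℤ) : D.lpow k = ((D.lamUnit ^ k : Aˣ) : A) := by
  obtain ⟨m, rfl | rfl⟩ := k.eq_nat_or_neg
  · rw [lpow_natCast, zpow_natCast, Units.val_pow_eq_pow_val, lamUnit]
  · rw [lpow_neg_natCast, _root_.zpow_neg, zpow_natCast, ← inv_pow, Units.val_pow_eq_pow_val,
      lamUnit, Units.inv_mk]

theorem lpow_add (k l : ℤ) : D.lpow (k + l) = D.lpow k * D.lpow l := by
  simp only [lpow_eq_lamUnit_zpow, _root_.zpow_add, Units.val_mul]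

theorem lpow_zero : D.lpow 0 = 1 := by
  rw [lpow_eq_lamUnit_zpow, zpow_zero, Units.val_one]

theorem lpow_one : D.lpow 1 = D.lam := by
  rw [lpow_eq_lamUnit_zpow, zpow_one, lamUnit]

theorem commute_lpow (k : ℤ) (x : A) : Commute (D.lpow k) x := by
  rw [lpow_eq_lamUnit_zpow]
  exact (show Commute (D.lamUnit : A) x from D.lam_comm x).units_zpow_left k

theorem bar_pow (x : A) (m : ℕ) : D.bar (x ^ m) = D.bar x ^ m := by
  induction m with
  | zero => rw [pow_zero, pow_zero, D.bar_one]
  | succ m ih => rw [pow_succ, pow_succ', D.bar_mul, ih]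

theorem bar_lpow (k : ℤ) : D.bar (D.lpow k) = D.lpow (-k) := by
  obtain ⟨m, rfl | rfl⟩ := k.eq_nat_or_neg
  · rw [lpow_natCast, lpow_neg_natCast, bar_pow]
  · rw [neg_neg, lpow_natCast, lpow_neg_natCast, bar_pow, D.bar_bar]

end Symmetry

section AdjCoeff

variable {A : Type*} [Ring A] (D : FormRingData A) {n : ℕ}

/-- The coefficient at `(-j, -i)` of the adjoint of the matrix unit `c e_{ij}` with respect to the
`λ`-hermitian form defining the unitary group; thus `T_{ij}(c)` is
`1 + c e_{ij} - adjCoeff i j c e_{-j,-i}`. -/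
def adjCoeff (i j : Idx n) (c : A) : A := D.lpow ((Idx.eps j - Idx.eps i) / 2) * D.bar c

theorem adjCoeff_mul (i j k : Idx n) (a b : A) :
    D.adjCoeff i k (a * b) = D.adjCoeff j k b * D.adjCoeff i j a := by
  have hexp : (Idx.eps k - Idx.eps i) / 2 =
      (Idx.eps k - Idx.eps j) / 2 + (Idx.eps j - Idx.eps i) / 2 := by
    have := i.eps_eq_one_or_neg_one
    have := j.eps_eq_one_or_neg_one
    have := k.eps_eq_one_or_neg_one
    omega
  simp only [adjCoeff]
  rw [hexp, lpow_add, D.bar_mul, mul_assoc, mul_assoc, ← (D.commute_lpow _ (D.bar b)).left_comm]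

theorem adjCoeff_neg (i j : Idx n) (c : A) : D.adjCoeff i j (-c) = -D.adjCoeff i j c := by
  simp only [adjCoeff, map_neg, mul_neg]

theorem adjCoeff_neg_right (i : Idx n) (c : A) :
    D.adjCoeff i (Idx.neg i) c = D.lpow (Idx.eps (Idx.neg i)) * D.bar c := by
  have hexp : (Idx.eps (Idx.neg i) - Idx.eps i) / 2 = Idx.eps (Idx.neg i) := by
    have := i.eps_eq_one_or_neg_one
    have := i.eps_neg
    omega
  rw [adjCoeff, hexp]

theorem adjCoeff_adjCoeff (i j : Idx n) (c : A) :
    D.adjCoeff (Idx.neg j) (Idx.neg i) (D.adjCoeff i j c) = c := by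
  have hexp : (Idx.eps (Idx.neg i) - Idx.eps (Idx.neg j)) / 2 -
      (Idx.eps j - Idx.eps i) / 2 = 0 := by
    rw [Idx.eps_neg, Idx.eps_neg]
    omega
  rw [adjCoeff, adjCoeff, D.bar_mul, D.bar_bar, bar_lpow, ← (D.commute_lpow _ c).eq, ← mul_assoc,
    ← lpow_add, ← sub_eq_add_neg, hexp, lpow_zero, one_mul]

end AdjCoeff

section LongParam

variable {A : Type*} [Ring A] (D : FormRingData A) {n : ℕ} {i j : Idx n} {Γ Δ : AddSubgroup A}

/-- The group `λ^{-(ε(i)+1)/2} Γ` of parameters of the long root elements at position `(i, -i)`. -/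
def longParam (Γ : AddSubgroup A) (i : Idx n) : AddSubgroup A :=
  Γ.map (AddMonoidHom.mulLeft (D.lpow (-(Idx.eps i + 1) / 2)))

variable {D}

theorem mem_longParam_neg {x : A} :
    x ∈ D.longParam Γ (Idx.neg i) ↔ ∃ g ∈ Γ, x = D.lpow ((Idx.eps i - 1) / 2) * g := by
  have hexp : -(Idx.eps (Idx.neg i) + 1) / 2 = (Idx.eps i - 1) / 2 := by
    rw [Idx.eps_neg, neg_add, _root_.neg_neg, sub_eq_add_neg]
  simp only [longParam, AddSubgroup.mem_map, AddMonoidHom.coe_mulLeft, hexp, eq_comm]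

theorem longParam_mono (h : Γ ≤ Δ) (i : Idx n) : D.longParam Γ i ≤ D.longParam Δ i :=
  AddSubgroup.map_mono h

theorem mem_of_mem_longParam {FI : FormIdeal D} {x : A} (hx : x ∈ D.longParam FI.Gamma i) :
    x ∈ FI.I := by
  obtain ⟨g, hg, rfl⟩ := hx
  exact FI.mul_mem_left _ _ (FI.gamma_le_I hg)

theorem adjCoeff_of_mem_longParam {x : A} (hx : x ∈ D.longParam D.Lambda i) :
    D.adjCoeff i (Idx.neg i) x = -x := by
  obtain ⟨g, hg, rfl⟩ := hx
  have hexp : Idx.eps (Idx.neg i) + -(-(Idx.eps i + 1) / 2) = -(Idx.eps i + 1) / 2 + 1 := by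
    have := i.eps_eq_one_or_neg_one
    have := i.eps_neg
    omega
  rw [adjCoeff_neg_right, AddMonoidHom.coe_mulLeft, D.bar_mul, bar_lpow,
    ← (D.commute_lpow _ (D.bar g)).eq, ← mul_assoc, ← lpow_add, hexp, lpow_add, mul_assoc, lpow_one,
    ← mul_neg, neg_eq_iff_eq_neg.2 (D.lambdaMax_mem g hg)]

theorem mul_mul_adjCoeff_mem_longParam {x c : A} (hx : x ∈ D.longParam Γ j)
    (hc : ∀ g ∈ Γ, c * g * D.bar c ∈ Δ) : c * x * D.adjCoeff i j c ∈ D.longParam Δ i := by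
  obtain ⟨g, hg, rfl⟩ := hx
  refine ⟨_, hc g hg, ?_⟩
  have hexp : -(Idx.eps i + 1) / 2 = -(Idx.eps j + 1) / 2 + (Idx.eps j - Idx.eps i) / 2 := by
    have := i.eps_eq_one_or_neg_one
    have := j.eps_eq_one_or_neg_one
    omega
  rw [AddMonoidHom.coe_mulLeft, AddMonoidHom.coe_mulLeft, adjCoeff, hexp, lpow_add,
    ← (D.commute_lpow _ c).left_comm, (D.commute_lpow _ (c * g)).symm.mul_mul_mul_comm]

theorem sub_adjCoeff_mem_longParam {FI : FormIdeal D} {a : A} (ha : a ∈ FI.I) (i : Idx n) :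
    a - D.adjCoeff i (Idx.neg i) a ∈ D.longParam FI.Gamma i := by
  let m := -(Idx.eps i + 1) / 2
  have hmem : D.lpow (-m) * a - D.lam * D.bar (D.lpow (-m) * a) ∈ FI.Gamma :=
    FI.gammaMin_le (AddSubgroup.subset_closure (Or.inl ⟨_, FI.mul_mem_left _ a ha, rfl⟩))
  have hexp : Idx.eps (Idx.neg i) = m + 1 + m := by
    have := i.eps_eq_one_or_neg_one
    have := i.eps_neg
    omega
  refine ⟨_, hmem, ?_⟩
  rw [AddMonoidHom.coe_mulLeft, adjCoeff_neg_right, hexp, D.bar_mul, bar_lpow, neg_neg,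
    ← (D.commute_lpow m (D.bar a)).eq, mul_sub, ← mul_assoc, ← lpow_add, add_neg_cancel, lpow_zero,
    one_mul, lpow_add, lpow_add, lpow_one, mul_assoc, mul_assoc]

end LongParam

section Transvection

variable {A : Type*} [Ring A] (D : FormRingData A) {n : ℕ} {i j k : Idx n}

theorem val_TS (h : i ≠ j) (c : A) : (D.TS i j c : Matrix (Idx n) (Idx n) A) =
    1 + (Matrix.single i j c - Matrix.single (Idx.neg j) (Idx.neg i) (D.adjCoeff i j c)) := by
  rw [TS, dif_neg h]
  rfl

theorem val_TL (i : Idx n) (c : A) :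
    (D.TL i c : Matrix (Idx n) (Idx n) A) = 1 + Matrix.single i (Idx.neg i) c :=
  rfl

theorem TS_eq_TS_neg_neg (h : i ≠ j) (c : A) :
    D.TS i j c = D.TS (Idx.neg j) (Idx.neg i) (-D.adjCoeff i j c) := by
  refine Units.ext ?_
  rw [val_TS D h, val_TS D (Idx.neg_ne_neg_iff.2 h.symm), adjCoeff_neg, adjCoeff_adjCoeff,
    Idx.neg_neg, Idx.neg_neg, stdBasisMatrix_neg', stdBasisMatrix_neg', neg_sub_neg]

theorem commute_TL_TL (h : i ≠ Idx.neg j) (x y : A) : Commute (D.TL i x) (D.TL j y) :=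
  commute_of_val_eq_one_add (D.val_TL i x) (D.val_TL j y)
    (Matrix.single_mul_single_of_ne _ _ _ _ (Idx.ne_neg_comm.1 h).symm _)
    (Matrix.single_mul_single_of_ne _ _ _ _ h.symm _)

theorem commute_TS_TL_neg (h : i ≠ j) (c x : A) : Commute (D.TS i j c) (D.TL (Idx.neg j) x) := by
  have hneg := Idx.neg_ne_neg_iff.2 h
  refine commute_of_val_eq_one_add (D.val_TS h c) (D.val_TL _ x) ?_ ?_
  · simp only [sub_mul, Matrix.single_mul_single_of_ne, (Idx.neg_ne j).symm, hneg, ne_eq,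
      not_false_eq_true, sub_self]
  · simp only [mul_sub, Idx.neg_neg, Matrix.single_mul_single_of_ne, (Idx.neg_ne j).symm, h.symm,
      ne_eq, not_false_eq_true, sub_self]

theorem commutatorElement_TS_TL (hij : i ≠ j) (hij' : i ≠ Idx.neg j) (c : A) {x : A}
    (hx : x ∈ D.longParam D.Lambda j) :
    ⁅D.TS i j c, D.TL j x⁆ = D.TS i (Idx.neg j) (c * x) * D.TL i (c * x * D.adjCoeff i j c) := by
  have hji' := Idx.ne_neg_comm.1 hij'
  have hadj : D.adjCoeff i (Idx.neg j) (c * x) = -(x * D.adjCoeff i j c) := by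
    rw [D.adjCoeff_mul i j, adjCoeff_of_mem_longParam hx, neg_mul]
  refine Units.ext ?_
  rw [val_commutatorElement_of_val_eq_one_add (D.val_TS hij c) (D.val_TL j x)
    (D.Xmat_mul hij c c) (Matrix.single_mul_single_of_ne _ _ _ _ (Idx.neg_ne j) _), Units.val_mul,
    val_TS D hij', val_TL, hadj, stdBasisMatrix_neg']
  · simp only [sub_mul, mul_sub, mul_add, add_mul, neg_mul, one_mul, mul_one, zero_mul, Idx.neg_neg,
      Matrix.single_mul_single_same, Matrix.single_mul_single_of_ne, ne_eq, not_false_eq_true,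
      Idx.neg_ne i, hij'.symm, hji'.symm]
    abel
  · simp only [sub_mul, mul_sub, zero_mul, sub_self, Matrix.single_mul_single_same,
      Matrix.single_mul_single_of_ne, ne_eq, not_false_eq_true, hij'.symm, hji'.symm]

theorem commutatorElement_TS_TS_neg (hik : i ≠ k) (hik' : i ≠ Idx.neg k) (a c : A) :
    ⁅D.TS i k a, D.TS k (Idx.neg i) c⁆ =
      D.TL i (a * c - D.adjCoeff i (Idx.neg i) (a * c)) := by
  have hki' := Idx.ne_neg_comm.1 hik'
  have hneg := Idx.neg_ne_neg_iff.2 hik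
  refine Units.ext ?_
  rw [val_commutatorElement_of_val_eq_one_add (D.val_TS hik a) (D.val_TS hki' c)
    (D.Xmat_mul hik a a) (D.Xmat_mul hki' c c), val_TL, D.adjCoeff_mul i k,
    sub_eq_add_neg (a * c), Matrix.single_add, stdBasisMatrix_neg']
  · simp only [sub_mul, mul_sub, zero_mul, Idx.neg_neg, Matrix.single_mul_single_same,
      Matrix.single_mul_single_of_ne, ne_eq, not_false_eq_true, Idx.neg_ne i, hik.symm, hneg,
      hki'.symm, hik'.symm]
    abel
  · simp only [sub_mul, mul_sub, zero_mul, sub_self, Idx.neg_neg, Matrix.single_mul_single_same,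
      Matrix.single_mul_single_of_ne, ne_eq, not_false_eq_true, Idx.neg_ne i, hneg, hki'.symm,
      hik'.symm]

end Transvection

section Level

variable {A : Type*} [Ring A] (D : FormRingData A) {n : ℕ} {I Γ : AddSubgroup A} {i j : Idx n}

theorem TS_mem_FU (hij : i ≠ j) (hij' : i ≠ Idx.neg j) {c : A} (hc : c ∈ I) :
    D.TS i j c ∈ D.FU n I Γ :=
  Subgroup.subset_closure (Or.inl ⟨i, j, hij, hij', c, hc, rfl⟩)

theorem TL_mem_FU {x : A} (hx : x ∈ D.longParam Γ i) : D.TL i x ∈ D.FU n I Γ := by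
  obtain ⟨g, hg, rfl⟩ := hx
  exact Subgroup.subset_closure (Or.inr ⟨i, g, hg, rfl⟩)

theorem FU_le_EU : D.FU n I Γ ≤ D.EU n I Γ :=
  Subgroup.closure_mono fun t ht => ⟨1, one_mem _, t, ht, by rw [one_mul, inv_one, mul_one]⟩

theorem EUmax_le_normalizer_EU :
    D.EUmax n ≤ Subgroup.normalizer (D.EU n I Γ : Set (GLn A n)) := by
  refine Subgroup.le_normalizer_closure_iff.2 fun h hh x hx => ?_
  obtain ⟨g, hg, t, ht, rfl⟩ := hx
  exact Subgroup.subset_closure ⟨h * g, mul_mem hh hg, t, ht, by group⟩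

theorem TS_mem_normalizer_EU (hij : i ≠ j) (hij' : i ≠ Idx.neg j) (c : A) :
    D.TS i j c ∈ Subgroup.normalizer (D.EU n I Γ : Set (GLn A n)) :=
  D.EUmax_le_normalizer_EU (D.TS_mem_FU hij hij' (AddSubgroup.mem_top c))

theorem TL_mem_normalizer_EU {x : A} (hx : x ∈ D.longParam D.Lambda i) :
    D.TL i x ∈ Subgroup.normalizer (D.EU n I Γ : Set (GLn A n)) :=
  D.EUmax_le_normalizer_EU (D.TL_mem_FU hx)

theorem mul_mem_symI {S T : AddSubgroup A} {a b : A} (ha : a ∈ S) (hb : b ∈ T) :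
    a * b ∈ symI S T :=
  AddSubgroup.mem_sup_left (AddSubgroup.subset_closure ⟨a, ha, b, hb, rfl⟩)

theorem mul_mul_bar_mem_symG {J Δ : AddSubgroup A} {a d : A} (ha : a ∈ I) (hd : d ∈ Δ) :
    a * d * D.bar a ∈ D.symG I Γ J Δ :=
  AddSubgroup.mem_sup_right (AddSubgroup.subset_closure ⟨a, ha, d, hd, rfl⟩)

theorem EUsym_comm (n : ℕ) (I Γ J Δ : AddSubgroup A) :
    D.EUsym n I Γ J Δ = D.EUsym n J Δ I Γ := by
  simp only [EUsym, symG, symI, sup_comm (mulSub J I), sup_right_comm]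

variable {D}

theorem commutatorElement_TS_TL_mem_EUsym {FJ : FormIdeal D} (hij : i ≠ j)
    (hij' : i ≠ Idx.neg j) {c x : A} (hc : c ∈ I) (hx : x ∈ D.longParam FJ.Gamma j) :
    ⁅D.TS i j c, D.TL j x⁆ ∈ D.EUsym n I Γ FJ.I FJ.Gamma := by
  rw [D.commutatorElement_TS_TL hij hij' c (longParam_mono FJ.gamma_le_Lambda j hx)]
  refine D.FU_le_EU (mul_mem ?_ (D.TL_mem_FU ?_))
  · exact D.TS_mem_FU hij' (by rwa [Idx.neg_neg]) (mul_mem_symI hc (mem_of_mem_longParam hx))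
  · exact mul_mul_adjCoeff_mem_longParam hx fun d hd => D.mul_mul_bar_mem_symG hc hd

theorem commutatorElement_TS_TL_neg_mem_EUsym {FI FJ : FormIdeal D} (hij : i ≠ j)
    (hij' : i ≠ Idx.neg j) {c x : A} (hc : c ∈ FI.I) (hx : x ∈ D.longParam FJ.Gamma (Idx.neg i)) :
    ⁅D.TS i j c, D.TL (Idx.neg i) x⁆ ∈ D.EUsym n FI.I FI.Gamma FJ.I FJ.Gamma := by
  rw [D.TS_eq_TS_neg_neg hij c]
  exact commutatorElement_TS_TL_mem_EUsym (Idx.neg_ne_neg_iff.2 hij.symm)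
    (Idx.neg_ne_neg_iff.2 (Idx.ne_neg_comm.1 hij'))
    (neg_mem (FI.mul_mem_left _ _ (FI.bar_mem c hc))) hx

theorem commutatorElement_TL_TS_mem_EUsym {FI FJ : FormIdeal D} (hij : i ≠ j)
    (hij' : i ≠ Idx.neg j) {c x : A} (hx : x ∈ D.longParam FI.Gamma j) (hc : c ∈ FJ.I) :
    ⁅D.TL j x, D.TS i j c⁆ ∈ D.EUsym n FI.I FI.Gamma FJ.I FJ.Gamma := by
  rw [← commutatorElement_inv, EUsym_comm]
  exact inv_mem (commutatorElement_TS_TL_mem_EUsym hij hij' hc hx)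

theorem commutatorElement_TL_TL_neg_mul_inv_mem_EUsym {FI FJ : FormIdeal D} (hji : j ≠ i)
    (hji' : j ≠ Idx.neg i) {a b : A} (ha : a ∈ FI.I) (hb : b ∈ D.longParam FJ.Gamma (Idx.neg i)) :
    ⁅D.TL i (a - D.adjCoeff i (Idx.neg i) a), D.TL (Idx.neg i) b⁆ *
        ⁅D.TS i j a, D.TS j i b⁆⁻¹ ∈ D.EUsym n FI.I FI.Gamma FJ.I FJ.Gamma := by
  have hij' : i ≠ Idx.neg j := Idx.ne_neg_comm.1 hji'
  have hji'' : j ≠ Idx.neg (Idx.neg i) := by rwa [Idx.neg_neg]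
  have hbΛ := longParam_mono FJ.gamma_le_Lambda _ hb
  have hb' : b * D.adjCoeff j (Idx.neg i) 1 ∈ D.longParam FJ.Gamma j := by
    simpa only [one_mul] using mul_mul_adjCoeff_mem_longParam hb (FJ.gamma_conj 1)
  have hyz : ⁅D.TS i j a, D.TS j (Idx.neg i) 1⁆ = D.TL i (a - D.adjCoeff i (Idx.neg i) a) := by
    rw [D.commutatorElement_TS_TS_neg hji.symm hij', mul_one]
  have hzx : ⁅D.TS j (Idx.neg i) 1, D.TL (Idx.neg i) b⁆ =
      D.TS j i b * D.TL j (b * D.adjCoeff j (Idx.neg i) 1) := by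
    rw [D.commutatorElement_TS_TL hji' hji'' 1 hbΛ, one_mul, Idx.neg_neg]
  apply commutatorElement_mul_inv_mem_of_mem_normalizer (D.TL_mem_normalizer_EU hbΛ)
    (D.TS_mem_normalizer_EU hji.symm hij' a) (D.TS_mem_normalizer_EU hji' hji'' 1)
    (D.TS_mem_normalizer_EU hji hji' b)
    (D.TL_mem_normalizer_EU (longParam_mono FJ.gamma_le_Lambda _ hb')) hyz hzx
  case hyx => exact commutatorElement_TS_TL_neg_mem_EUsym hji.symm hij' ha hb
  case hxu => exact (D.commute_TS_TL_neg hji b b).symm.commutator_eq ▸ one_mem _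
  case hxv =>
    exact (D.commute_TL_TL (Idx.neg_ne_neg_iff.2 hji.symm) _ _).commutator_eq ▸ one_mem _
  case hyv => exact commutatorElement_TS_TL_mem_EUsym hji.symm hij' ha hb'
  case hwu =>
    exact commutatorElement_TL_TS_mem_EUsym hji hji' (sub_adjCoeff_mem_longParam ha i)
      (mem_of_mem_longParam hb)
  case hwv => exact (D.commute_TL_TL hij' _ _).commutator_eq ▸ one_mem _

end Level

end FormRingData

theorem statement13_general {A : Type*} [Ring A] (D : FormRingData A) (n : ℕ)
    (FI FJ : FormIdeal D) (i k : Idx n) (hk : k ≠ i) (hk' : k ≠ Idx.neg i)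
    (a : A) (ha : a ∈ FI.I)
    (b : A) (hb : ∃ d ∈ FJ.Gamma, b = D.lpow ((Idx.eps i - 1) / 2) * d) :
    ⁅D.TL i (a - D.lpow (Idx.eps (Idx.neg i)) * D.bar a), D.TL (Idx.neg i) b⁆ *
        (⁅D.TS i k a, D.TS k i b⁆)⁻¹ ∈
      D.EUsym n FI.I FI.Gamma FJ.I FJ.Gamma := by
  rw [← D.adjCoeff_neg_right]
  exact FormRingData.commutatorElement_TL_TL_neg_mul_inv_mem_EUsym hk hk' ha
    (FormRingData.mem_longParam_neg.2 hb)

/-- Lemma (matching elementary commutators of different root lengths):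
`[T_{i,−i}(a − λ^{ε(−i)} ā), T_{−i,i}(b)] ≡ [T_{ik}(a), T_{ki}(b)]` modulo
`EU(2n,(I,Γ)∘(J,Δ))`. -/
theorem statement13 {A : Type*} [Ring A] (D : FormRingData A) (n : ℕ) (hn : 3 ≤ n)
    (FI FJ : FormIdeal D) (i k : Idx n) (hk : k ≠ i) (hk' : k ≠ Idx.neg i)
    (a : A) (ha : a ∈ FI.I)
    (b : A) (hb : ∃ d ∈ FJ.Gamma, b = D.lpow ((Idx.eps i - 1) / 2) * d) :
    ⁅D.TL i (a - D.lpow (Idx.eps (Idx.neg i)) * D.bar a), D.TL (Idx.neg i) b⁆ *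
        (⁅D.TS i k a, D.TS k i b⁆)⁻¹ ∈
      D.EUsym n FI.I FI.Gamma FJ.I FJ.Gamma :=
  statement13_general D n FI FJ i k hk hk' a ha b hb
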